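/- Let R be a commutative noetherian ring and 𝔞 an ideal with cd(𝔞,R) ≤ 1. Then the full subcategory of 𝔞-cofinite R-modules is an abelian subcategory of the category of R-modules (i.e., it is closed under kernels and cokernels of homomorphisms between its objects). -/

import Mathlib

open CategoryTheory

/-- An `R`-module `M` is `I`-cofinite if its support is contained in `V(I)` and
`Ext^i_R(R/I, M)` is a finitely generated `R`-module for every `i ≥ 0`. -/
def IsCofinite {R : Type} [CommRing R] (I : Ideal R) (M : Type) [AddCommGroup M]
    [Module R M] : Prop :=
  Module.support R M ⊆ PrimeSpectrum.zeroLocus (I : Set R) ∧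
  ∀ i : ℕ, Module.Finite R
    (((Ext R (ModuleCat R) i).obj (Opposite.op (ModuleCat.of R (R ⧸ I)))).obj
      (ModuleCat.of R M))

/-!
Vanishing of the local cohomology of `R` above degree `c` passes to all finitely generated modules
by descending induction on the degree, since it holds in large degrees for every module. Dimension
shifting writes every class in `Ext^i(R/I, M)` with `i > c` as a Yoneda product with one fixed class
in `Ext^(c+1)(R/I, Z)`, where `Z` is finitely generated. Local cohomology being the colimit of the
modules `Ext^i(R/L, -)`, this class restricts to zero along `R/L → R/I` for some `L ⊆ I ⊆ √L`, and
hence so do all the others: for `i > c` and any `M`, the module `Ext^i(R/I, M)` is a quotient of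
`Ext^(i-1)(K, M)`, where `K` is the kernel of `R/L → R/I`. By dévissage on `K`, finiteness of
`Ext^i(R/I, M)` for `i ≤ c` implies finiteness for all `i`.

For `c = 1` this applies to the kernel of `f : M → N`: the modules `Ext^i(R/I, ker f)` with `i ≤ 1`
are finitely generated because `M` is cofinite and `Hom(R/I, im f) ⊆ Hom(R/I, N)`. Long exact
sequences then settle the image and the cokernel.
-/

open Limits

universe w u

section DerivedExt

open Opposite

variable (R : Type*) [Ring R] {C : Type*} [Category* C] [Abelian C] [Linear R C]
  {X X' : C} (P : ProjectiveResolution X) (P' : ProjectiveResolution X') (Y : C) (n : ℕ)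

/-- The complex of `R`-modules `Hom(P, Y)`, with arrows reversed, as it occurs in the definition of
`Ext R C n`. -/
noncomputable abbrev homComplex : ChainComplex (ModuleCat R)ᵒᵖ ℕ :=
  (((linearYoneda R C).obj Y).rightOp.mapHomologicalComplex _).obj P.complex

/-- The module of `n`-cocycles of `Hom(P, Y)`. Since `homComplex` lives in the opposite category,
cocycles appear as opcycles. -/
noncomputable abbrev homCocycles : ModuleCat R := ((homComplex R P Y).opcycles n).unop

/-- The inclusion of the cocycles into `Hom(Pₙ, Y)`. -/
noncomputable def homCocyclesι : homCocycles R P Y n ⟶ ModuleCat.of R (P.complex.X n ⟶ Y) :=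
  ((homComplex R P Y).pOpcycles n).unop

lemma homCocyclesι_injective : Function.Injective (homCocyclesι R P Y n).hom :=
  (ModuleCat.mono_iff_injective _).1 (unop_mono_of_epi _)

variable {Y n} in
lemma mem_range_homCocyclesι_iff (f : P.complex.X n ⟶ Y) :
    (∃ z, (homCocyclesι R P Y n).hom z = f) ↔ P.complex.d (n + 1) n ≫ f = 0 := by
  have h := (ShortComplex.exact_of_g_is_cokernel (ShortComplex.mk _ _
    ((homComplex R P Y).d_pOpcycles (n + 1) n))
    ((homComplex R P Y).opcyclesIsCokernel (n + 1) n (by simp))).unop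
  rw [ShortComplex.moduleCat_exact_iff_range_eq_ker] at h
  exact SetLike.ext_iff.1 h f

variable {Y n} in
lemma d_comp_homCocyclesι (z : homCocycles R P Y n) :
    P.complex.d (n + 1) n ≫ (homCocyclesι R P Y n).hom z = 0 :=
  (mem_range_homCocyclesι_iff R P _).1 ⟨z, rfl⟩

lemma fromOpcycles_unop_comp_homCocyclesι (j : ℕ) :
    ((homComplex R P Y).fromOpcycles n j).unop ≫ homCocyclesι R P Y n =
      ((homComplex R P Y).d n j).unop := by
  rw [← (homComplex R P Y).p_fromOpcycles n j]
  rfl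

variable {P P'} in
/-- Precomposition of cocycles with a morphism of complexes. -/
noncomputable def homCocyclesMap (φ : P'.complex ⟶ P.complex) :
    homCocycles R P Y n ⟶ homCocycles R P' Y n :=
  (HomologicalComplex.opcyclesMap
    ((((linearYoneda R C).obj Y).rightOp.mapHomologicalComplex _).map φ) n).unop

variable {P P' Y n} in
lemma homCocyclesι_homCocyclesMap (φ : P'.complex ⟶ P.complex) (z : homCocycles R P Y n) :
    (homCocyclesι R P' Y n).hom ((homCocyclesMap R Y n φ).hom z) =
      φ.f n ≫ (homCocyclesι R P Y n).hom z :=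
  LinearMap.congr_fun (congrArg (fun t ↦ ModuleCat.Hom.hom (Quiver.Hom.unop t))
    (HomologicalComplex.p_opcyclesMap
      ((((linearYoneda R C).obj Y).rightOp.mapHomologicalComplex _).map φ) n)) z

section Abelian

variable [HasExt.{w} C]

lemma extMk_zero_eq_zero_iff {Y : C} (f : P.complex.X 0 ⟶ Y) (hf : P.complex.d 1 0 ≫ f = 0) :
    P.extMk f 1 rfl hf = 0 ↔ f = 0 := by
  refine ⟨fun h ↦ ?_, fun h ↦ by subst h; simp⟩
  rw [← P.extEquivCohomologyClass.apply_eq_iff_eq,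
    ProjectiveResolution.extEquivCohomologyClass_extMk,
    ProjectiveResolution.extEquivCohomologyClass_zero,
    CochainComplex.HomComplex.CohomologyClass.mk_eq_zero_iff,
    CochainComplex.HomComplex.Cocycle.toSingleMk_mem_coboundaries_iff _ _ _ _ _ 1 (by simp)] at h
  obtain ⟨g, hg⟩ := h
  have d_eq_zero : P.cochainComplex.d (-((0 : ℕ) : ℤ)) 1 = 0 :=
    IsZero.eq_of_tgt (P.cochainComplex.isZero_of_isStrictlyLE 0 1 (by simp)) _ _
  rw [d_eq_zero, zero_comp] at hg
  rw [← cancel_epi (P.cochainComplexXIso (-((0 : ℕ) : ℤ)) 0 rfl).hom, ← hg, comp_zero]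

lemma extMk_eq_zero_iff_exists_d_next {Y : C} {n : ℕ} (f : P.complex.X n ⟶ Y)
    (hf : P.complex.d (n + 1) n ≫ f = 0) :
    P.extMk f (n + 1) rfl hf = 0 ↔
      ∃ g, P.complex.d n ((ComplexShape.down ℕ).next n) ≫ g = f := by
  cases n with
  | zero =>
    rw [extMk_zero_eq_zero_iff, P.complex.shape 0 _ (by simp)]
    simp [eq_comm]
  | succ n => exact P.extMk_eq_zero_iff f _ _ hf _ (by simp)

/-- The class in `Abelian.Ext` of a cocycle of `Hom(P, Y)`. -/
noncomputable def homCocyclesToAbelianExt : homCocycles R P Y n →ₗ[R] Abelian.Ext X Y n where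
  toFun z := P.extMk ((homCocyclesι R P Y n).hom z) (n + 1) rfl (d_comp_homCocyclesι R P z)
  map_add' x y := by
    rw [P.add_extMk]
    congr 1
    exact map_add (homCocyclesι R P Y n).hom x y
  map_smul' r x := by
    rw [RingHom.id_apply, Abelian.Ext.smul_eq_comp_mk₀, P.extMk_comp_mk₀]
    congr 1
    rw [map_smul]
    simp only [Linear.comp_smul, Category.comp_id]

lemma homCocyclesToAbelianExt_surjective :
    Function.Surjective (homCocyclesToAbelianExt R P Y n) := by
  intro α
  obtain ⟨f, hf, rfl⟩ := P.extMk_surjective α (n + 1) rfl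
  obtain ⟨z, rfl⟩ := (mem_range_homCocyclesι_iff R P f).2 hf
  exact ⟨z, rfl⟩

variable {Y n P P'} in
lemma homCocyclesToAbelianExt_homCocyclesMap {g : X' ⟶ X} (φ : ProjectiveResolution.Hom P' P g)
    (z : homCocycles R P Y n) :
    homCocyclesToAbelianExt R P' Y n ((homCocyclesMap R Y n φ.hom).hom z) =
      (Abelian.Ext.mk₀ g).comp (homCocyclesToAbelianExt R P Y n z) (zero_add n) := by
  refine Eq.trans ?_ (ProjectiveResolution.mk₀_comp_extMk _ (n + 1) rfl
    (d_comp_homCocyclesι R P z) φ).symm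
  dsimp only [homCocyclesToAbelianExt, LinearMap.coe_mk, AddHom.coe_mk]
  congr 1
  exact homCocyclesι_homCocyclesMap R φ.hom z

end Abelian

variable [EnoughProjectives C]

/-- The homology of `Hom(P, Y)` as the value at `X` of the left derived functor in the definition
of `Ext R C n`. -/
noncomputable def leftDerivedIsoHomology :
    (((linearYoneda R C).obj Y).rightOp.leftDerived n).obj X ≅ (homComplex R P Y).homology n :=
  P.isoLeftDerivedObj ((linearYoneda R C).obj Y).rightOp n

/-- The class in `Ext R C n` of a cocycle of `Hom(P, Y)`. -/
noncomputable def homCocyclesToExt :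
    homCocycles R P Y n ⟶ ((Ext R C n).obj (op X)).obj Y :=
  ((leftDerivedIsoHomology R P Y n).hom ≫ (homComplex R P Y).homologyι n).unop

lemma homCocyclesToExt_surjective : Function.Surjective (homCocyclesToExt R P Y n).hom :=
  (ModuleCat.epi_iff_surjective _).1 (unop_epi_of_mono
    ((leftDerivedIsoHomology R P Y n).hom ≫ (homComplex R P Y).homologyι n))

variable {Y n} in
lemma homCocyclesToExt_eq_zero_iff (z : homCocycles R P Y n) :
    (homCocyclesToExt R P Y n).hom z = 0 ↔
      ∃ g, P.complex.d n ((ComplexShape.down ℕ).next n) ≫ g = (homCocyclesι R P Y n).hom z := by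
  have iso_injective : Function.Injective
      (leftDerivedIsoHomology R P Y n).hom.unop.hom :=
    (ModuleCat.mono_iff_injective _).1 (unop_mono_of_epi _)
  have exact_ι := (ShortComplex.exact_of_f_is_kernel (ShortComplex.mk _ _
    ((homComplex R P Y).homologyι_comp_fromOpcycles n _))
    ((homComplex R P Y).homologyIsKernel n _ rfl)).unop
  rw [ShortComplex.moduleCat_exact_iff_range_eq_ker] at exact_ι
  have d_apply (g : P.complex.X ((ComplexShape.down ℕ).next n) ⟶ Y) : (homCocyclesι R P Y n).hom
      (((homComplex R P Y).fromOpcycles n _).unop.hom g) = P.complex.d n _ ≫ g :=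
    LinearMap.congr_fun
      (congrArg ModuleCat.Hom.hom (fromOpcycles_unop_comp_homCocyclesι R P Y n _)) g
  calc (homCocyclesToExt R P Y n).hom z = 0
    _ ↔ ((homComplex R P Y).homologyι n).unop.hom z = 0 := map_eq_zero_iff _ iso_injective
    _ ↔ ∃ g, ((homComplex R P Y).fromOpcycles n _).unop.hom g = z :=
      (SetLike.ext_iff.1 exact_ι z).symm
    _ ↔ _ := exists_congr fun g ↦
      (homCocyclesι_injective R P Y n).eq_iff.symm.trans (Eq.congr_left (d_apply g))

variable {Y n P P'} in
lemma homCocyclesToExt_homCocyclesMap {g : X' ⟶ X} (φ : ProjectiveResolution.Hom P' P g)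
    (z : homCocycles R P Y n) :
    (homCocyclesToExt R P' Y n).hom ((homCocyclesMap R Y n φ.hom).hom z) =
      (((Ext R C n).map g.op).app Y).hom ((homCocyclesToExt R P Y n).hom z) := by
  let F := ((linearYoneda R C).obj Y).rightOp
  let Φ : homComplex R P' Y ⟶ homComplex R P Y := (F.mapHomologicalComplex _).map φ.hom
  have iso_naturality : (F.leftDerived n).map g ≫ (leftDerivedIsoHomology R P Y n).hom =
      (leftDerivedIsoHomology R P' Y n).hom ≫ HomologicalComplex.homologyMap Φ n :=
    ProjectiveResolution.isoLeftDerivedObj_hom_naturality g P' P φ.hom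
      (φ.hom_f_zero_comp_π_f_zero.trans (by rw [ChainComplex.single₀_map_f_zero]; rfl)) F n
  have naturality : (F.leftDerived n).map g ≫ (leftDerivedIsoHomology R P Y n).hom ≫
      (homComplex R P Y).homologyι n =
      ((leftDerivedIsoHomology R P' Y n).hom ≫ (homComplex R P' Y).homologyι n) ≫
        HomologicalComplex.opcyclesMap Φ n := by
    rw [← Category.assoc, iso_naturality, Category.assoc, Category.assoc,
      HomologicalComplex.homologyι_naturality]
  exact (LinearMap.congr_fun
    (congrArg (fun t ↦ ModuleCat.Hom.hom (Quiver.Hom.unop t)) naturality) z).symm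

variable [HasExt.{w} C]

lemma ker_homCocyclesToAbelianExt :
    LinearMap.ker (homCocyclesToAbelianExt R P Y n) =
      LinearMap.ker (homCocyclesToExt R P Y n).hom := by
  ext z
  rw [LinearMap.mem_ker, LinearMap.mem_ker, homCocyclesToExt_eq_zero_iff]
  exact extMk_eq_zero_iff_exists_d_next P _ (d_comp_homCocyclesι R P z)

/-- The left derived functors of `Hom(-, Y)` compute the `Ext`-modules defined by means of the
derived category. -/
noncomputable def extLinearEquiv (X Y : C) (n : ℕ) :
    ((Ext R C n).obj (op X)).obj Y ≃ₗ[R] Abelian.Ext X Y n :=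
  let P := projectiveResolution X
  ((homCocyclesToExt R P Y n).hom.quotKerEquivOfSurjective
      (homCocyclesToExt_surjective R P Y n)).symm ≪≫ₗ
    Submodule.quotEquivOfEq _ _ (ker_homCocyclesToAbelianExt R P Y n).symm ≪≫ₗ
    (homCocyclesToAbelianExt R P Y n).quotKerEquivOfSurjective
      (homCocyclesToAbelianExt_surjective R P Y n)

variable {Y n} in
lemma extLinearEquiv_homCocyclesToExt (z : homCocycles R (projectiveResolution X) Y n) :
    extLinearEquiv R X Y n ((homCocyclesToExt R _ Y n).hom z) =
      homCocyclesToAbelianExt R _ Y n z := by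
  simp only [extLinearEquiv, LinearEquiv.trans_apply]
  rw [LinearMap.quotKerEquivOfSurjective_symm_apply]
  rfl

variable {Y n} in
lemma extLinearEquiv_naturality (g : X' ⟶ X) (ξ : ((Ext R C n).obj (op X)).obj Y) :
    extLinearEquiv R X' Y n ((((Ext R C n).map g.op).app Y).hom ξ) =
      (Abelian.Ext.mk₀ g).comp (extLinearEquiv R X Y n ξ) (zero_add n) := by
  obtain ⟨z, rfl⟩ := homCocyclesToExt_surjective R (projectiveResolution X) Y n ξ
  let φ : ProjectiveResolution.Hom (projectiveResolution X') (projectiveResolution X) g :=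
    ⟨ProjectiveResolution.lift g _ _,
      HomologicalComplex.congr_hom (ProjectiveResolution.lift_commutes g _ _) 0⟩
  rw [← homCocyclesToExt_homCocyclesMap R φ, extLinearEquiv_homCocyclesToExt,
    extLinearEquiv_homCocyclesToExt, homCocyclesToAbelianExt_homCocyclesMap]

variable {Y n} in
lemma finite_ext_iff : Module.Finite R (((Ext R C n).obj (op X)).obj Y) ↔
    Module.Finite R (Abelian.Ext X Y n) :=
  Module.Finite.equiv_iff (extLinearEquiv R X Y n)

end DerivedExt

section Colon

variable {R : Type u} [CommRing R]

/-- The projection `R/L → R/K` for ideals `L ≤ K`, as a morphism of `R`-modules. -/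
abbrev quotientFactor {L K : Ideal R} (h : L ≤ K) :
    ModuleCat.of R (R ⧸ L) ⟶ ModuleCat.of R (R ⧸ K) :=
  ModuleCat.ofHom (Submodule.factor h)

lemma quotientFactor_comp {M L K : Ideal R} (h : M ≤ L) (h' : L ≤ K) :
    quotientFactor h ≫ quotientFactor h' = quotientFactor (h.trans h') := by
  simp [← ModuleCat.ofHom_comp]

/-- The morphism `R/K → R/L` given by multiplication by `a`, where `K ≤ (L : a)`. -/
abbrev quotientMul (a : R) {K L : Ideal R} (h : K ≤ L.colon {a}) :
    ModuleCat.of R (R ⧸ K) ⟶ ModuleCat.of R (R ⧸ L) :=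
  ModuleCat.ofHom (Submodule.mapQ K L (LinearMap.mulLeft R a) fun b hb ↦ by
    simpa [mul_comm] using Submodule.mem_colon_singleton.1 (h hb))

lemma le_colon_singleton (L : Ideal R) (x : R) : L ≤ L.colon {x} := fun _ ha ↦
  Submodule.mem_colon_singleton.2 (L.mul_mem_right x ha)

/-- The complex `0 ⟶ R/(L : x) ⟶ R/L ⟶ R/(L + xR) ⟶ 0`. -/
abbrev colonShortComplex (L : Ideal R) (x : R) : ShortComplex (ModuleCat.{u} R) where
  f := quotientMul x (le_refl (L.colon {x}))
  g := quotientFactor (le_sup_left : L ≤ L ⊔ Ideal.span {x})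
  zero := by
    ext
    exact (Submodule.Quotient.mk_eq_zero _).2
      (Ideal.mem_sup_right (Ideal.mem_span_singleton'.2 ⟨1, mul_comm _ _⟩))

lemma colonShortComplex_shortExact (L : Ideal R) (x : R) : (colonShortComplex L x).ShortExact := by
  refine ModuleCat.shortComplex_shortExact _ (fun y ↦ ⟨?_, ?_⟩) ?_
    (Submodule.factor_surjective le_sup_left)
  · obtain ⟨y, rfl⟩ := Submodule.Quotient.mk_surjective _ y
    intro hy
    obtain ⟨l, hl, z, hz, rfl⟩ := Submodule.mem_sup.1 ((Submodule.Quotient.mk_eq_zero _).1 hy)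
    obtain ⟨a, rfl⟩ := Ideal.mem_span_singleton'.1 hz
    refine ⟨Submodule.Quotient.mk a, (Submodule.Quotient.eq L).2 ?_⟩
    simpa [mul_comm] using hl
  · rintro ⟨a, rfl⟩
    exact LinearMap.congr_fun (congrArg ModuleCat.Hom.hom (colonShortComplex L x).zero) a
  · refine (injective_iff_map_eq_zero _).2 fun y hy ↦ ?_
    obtain ⟨y, rfl⟩ := Submodule.Quotient.mk_surjective _ y
    refine (Submodule.Quotient.mk_eq_zero _).2 (Submodule.mem_colon_singleton.2 ?_)
    simpa [mul_comm] using (Submodule.Quotient.mk_eq_zero _).1 hy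

lemma colon_mul_le {L' L : Ideal R} (h : L' ≤ L) (x c : R) :
    L'.colon {x * c} ≤ (L.colon {x}).colon {c} := fun a ha ↦ by
  simp only [Submodule.mem_colon_singleton, smul_eq_mul] at ha ⊢
  convert h ha using 1
  ring

/-- The morphism of short exact sequences given by multiplication by `c` on the left and by the
projections elsewhere. -/
abbrev colonShortComplexMap {L' L : Ideal R} (h : L' ≤ L) (x c : R) :
    colonShortComplex L' (x * c) ⟶ colonShortComplex L x where
  τ₁ := quotientMul c (colon_mul_le h x c)
  τ₂ := quotientFactor h
  τ₃ := quotientFactor (sup_le_sup h (Ideal.span_singleton_le_span_singleton.2 ⟨c, rfl⟩))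
  comm₁₂ := by
    ext
    exact congrArg Submodule.Quotient.mk (by simp)
  comm₂₃ := by simp only [quotientFactor_comp]

lemma exists_forall_pow_mul_eq_zero [IsNoetherianRing R] (x : R) :
    ∃ c, ∀ a : R, x ^ (c + 1) * a = 0 → x ^ c * a = 0 := by
  obtain ⟨c, hc⟩ := Filter.eventually_atTop.1
    (LinearMap.mulLeft R x).eventually_iSup_ker_pow_eq
  refine ⟨c, fun a ha ↦ ?_⟩
  have mem_ker : a ∈ LinearMap.ker (LinearMap.mulLeft R x ^ (c + 1)) := by
    simpa [LinearMap.pow_mulLeft] using ha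
  rw [← hc _ (Nat.le_succ c), hc c le_rfl] at mem_ker
  simpa [LinearMap.pow_mulLeft] using mem_ker

lemma exists_colon_pow_succ_le_colon_pow [IsNoetherianRing R] (x : R) :
    ∃ c, ∀ J M L : Ideal R, J ≤ M.radical → J ≤ L.radical →
      ∃ L' ≤ L, J ≤ L'.radical ∧ L'.colon {x ^ (c + 1)} ≤ M.colon {x ^ c} := by
  obtain ⟨c, hc⟩ := exists_forall_pow_mul_eq_zero x
  refine ⟨c, fun J M L hM hL ↦ ?_⟩
  have hJ : J.FG := IsNoetherian.noetherian J
  obtain ⟨m, hm⟩ := Ideal.exists_pow_le_of_le_radical_of_fg hM hJ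
  obtain ⟨l, hl⟩ := Ideal.exists_pow_le_of_le_radical_of_fg hL hJ
  -- By Artin-Rees, `x ^ (c + 1) * a = x ^ (c + 1) * b` with `b` in a high power of `J`;
  -- the choice of `c` then gives `x ^ c * a = x ^ c * b`.
  obtain ⟨k, hk⟩ := J.exists_pow_inf_eq_pow_smul (Ideal.span {x ^ (c + 1)} : Submodule R R)
  refine ⟨J ^ (m + k + l), (Ideal.pow_le_pow_right (by omega)).trans hl,
    fun a ha ↦ ⟨_, Ideal.pow_mem_pow ha _⟩, fun a ha ↦ ?_⟩
  rw [Submodule.mem_colon_singleton, smul_eq_mul, mul_comm] at ha ⊢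
  have mem_mul_span : x ^ (c + 1) * a ∈ J ^ (m + k + l - k) * Ideal.span {x ^ (c + 1)} := by
    refine Submodule.smul_mono le_rfl inf_le_right ((hk (m + k + l) (by omega)).le ?_)
    exact ⟨by simpa using ha, Ideal.mem_span_singleton.2 ⟨a, rfl⟩⟩
  obtain ⟨b, hb, hab⟩ := Ideal.mem_mul_span_singleton.1 mem_mul_span
  have mul_eq : x ^ c * (a - b) = 0 := hc _ (by rw [mul_sub, ← hab]; ring)
  rw [mul_sub, sub_eq_zero] at mul_eq
  rw [mul_eq]
  exact M.mul_mem_left _ (hm (Ideal.pow_le_pow_right (by omega) hb))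

end Colon

section LocalCohomology

variable {R : Type u} [CommRing R] {I J : Ideal R} {i : ℕ} {Z : ModuleCat.{u} R}

/-- The vanishing of the `i`-th local cohomology of `Z`, spelled out in terms of elements of the
colimit of `Ext^i(R/K, Z)` over the ideals `K` whose radical contains `I`. -/
def LocalCohomologyVanishes (I : Ideal R) (i : ℕ) (Z : ModuleCat.{u} R) : Prop :=
  ∀ K : Ideal R, I ≤ K.radical → ∀ α : Abelian.Ext (ModuleCat.of R (R ⧸ K)) Z i,
    ∃ (L : Ideal R) (h : L ≤ K), I ≤ L.radical ∧
      (Abelian.Ext.mk₀ (quotientFactor h)).comp α (zero_add i) = 0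

instance : IsCofiltered (localCohomology.SelfLERadical I) where
  nonempty := ⟨⟨I, Ideal.le_radical⟩⟩
  cone_objs K L :=
    ⟨⟨K.obj ⊓ L.obj, Ideal.radical_inf K.obj L.obj ▸ le_inf K.property L.property⟩,
      ⟨⟨⟨inf_le_left⟩⟩⟩, ⟨⟨⟨inf_le_right⟩⟩⟩, trivial⟩
  cone_maps K _ _ _ := ⟨K, 𝟙 K, rfl⟩

lemma localCohomologyVanishes_of_subsingleton [IsNoetherianRing R]
    (h : Subsingleton ((localCohomology I i).obj Z)) : LocalCohomologyVanishes I i Z := by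
  intro K hK α
  let D := localCohomology.selfLERadicalDiagram I
  let F := localCohomology.diagram D i
  let G := F ⋙ (evaluation _ _).obj Z
  let e : colimit G ≅ (localCohomology I i).obj Z :=
    (colimitObjIsoColimitCompEvaluation F Z).symm ≪≫ (localCohomology.isoSelfLERadical I i).app Z
  have colimit_subsingleton : Subsingleton (colimit G : ModuleCat R) :=
    e.toLinearEquiv.injective.subsingleton
  obtain ⟨ξ, rfl⟩ := (extLinearEquiv R (ModuleCat.of R (R ⧸ K)) Z i).surjective α
  obtain ⟨L, φ, hφ⟩ := Concrete.colimit_rep_eq_zero R G (.op ⟨K, hK⟩) ξ (Subsingleton.elim _ _)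
  refine ⟨L.unop.obj, (D.map φ.unop).down.down, L.unop.property, ?_⟩
  have naturality := extLinearEquiv_naturality R
    ((localCohomology.ringModIdeals D).map φ.unop) ξ
  exact naturality.symm.trans ((congrArg _ hφ).trans (map_zero _))

lemma exists_quotientMul_comp_eq_zero [IsNoetherianRing R] (h : LocalCohomologyVanishes J i Z)
    (x : R) {L : Ideal R} (hL : J ≤ L.radical)
    (β : Abelian.Ext (ModuleCat.of R (R ⧸ L.colon {x})) Z i) :
    ∃ (L' : Ideal R) (hL' : L' ≤ L) (c : ℕ), J ≤ L'.radical ∧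
      (Abelian.Ext.mk₀ (quotientMul (x ^ c) (colon_mul_le hL' x _))).comp β (zero_add i) = 0 := by
  obtain ⟨M, hM, hJM, hβ⟩ := h _ (hL.trans (Ideal.radical_mono (le_colon_singleton L x))) β
  obtain ⟨c, hc⟩ := exists_colon_pow_succ_le_colon_pow x
  obtain ⟨L', hL', hJL', hcolon⟩ := hc J M L hJM hL
  rw [pow_succ'] at hcolon
  refine ⟨L', hL', c, hJL', ?_⟩
  have factorization : quotientMul (x ^ c) (colon_mul_le hL' x _) =
      quotientMul (x ^ c) hcolon ≫ quotientFactor hM := by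
    ext
    rfl
  rw [factorization, ← Abelian.Ext.mk₀_comp_mk₀_assoc, hβ, Abelian.Ext.comp_zero]

lemma LocalCohomologyVanishes.sup_span_singleton [IsNoetherianRing R] (x : R)
    (h₀ : LocalCohomologyVanishes J i Z) (h₁ : LocalCohomologyVanishes J (i + 1) Z) :
    LocalCohomologyVanishes (J ⊔ Ideal.span {x}) (i + 1) Z := by
  intro K hK α
  obtain ⟨L, hLK, hJL, hα⟩ := h₁ K (le_sup_left.trans hK) α
  obtain ⟨n, hn⟩ : x ∈ K.radical :=
    hK (Ideal.mem_sup_right (Ideal.mem_span_singleton_self x))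
  have hA : L ⊔ Ideal.span {x ^ n} ≤ K :=
    sup_le hLK ((Ideal.span_singleton_le_iff_mem K).2 hn)
  -- The restriction of `α` to `R/(L + xⁿR)` dies on `R/L`, so it is induced by a class `β` on
  -- `R/(L : xⁿ)`. For smaller `L` and larger `n`, it is multiplied by a power of `x` and
  -- eventually killed.
  have hS := colonShortComplex_shortExact L (x ^ n)
  obtain ⟨β, hβ⟩ := Abelian.Ext.contravariant_sequence_exact₃ hS Z
    ((Abelian.Ext.mk₀ (quotientFactor hA)).comp α (zero_add (i + 1)))
    (by rwa [Abelian.Ext.mk₀_comp_mk₀_assoc, quotientFactor_comp]) (add_comm 1 i)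
  obtain ⟨L', hL', c, hJL', hβc⟩ := exists_quotientMul_comp_eq_zero h₀ (x ^ n) hJL β
  let Φ := colonShortComplexMap hL' (x ^ n) ((x ^ n) ^ c)
  have hS' := colonShortComplex_shortExact L' (x ^ n * (x ^ n) ^ c)
  refine ⟨L' ⊔ Ideal.span {x ^ n * (x ^ n) ^ c}, (sup_le_sup hL'
    (Ideal.span_singleton_le_span_singleton.2 ⟨_, rfl⟩)).trans hA, sup_le
      (hJL'.trans (Ideal.radical_mono le_sup_left))
      ((Ideal.span_singleton_le_iff_mem _).2 ⟨n + n * c, Ideal.mem_sup_right ?_⟩), ?_⟩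
  · rw [pow_add, pow_mul]
    exact Ideal.mem_span_singleton_self _
  calc _ = (Abelian.Ext.mk₀ Φ.τ₃).comp (hS.extClass.comp β (add_comm 1 i)) (zero_add (i + 1)) := by
        rw [hβ, Abelian.Ext.mk₀_comp_mk₀_assoc, quotientFactor_comp]
    _ = ((Abelian.Ext.mk₀ Φ.τ₃).comp hS.extClass (zero_add 1)).comp β (add_comm 1 i) :=
        (Abelian.Ext.comp_assoc _ _ _ _ _ (by omega)).symm
    _ = (hS'.extClass.comp (Abelian.Ext.mk₀ Φ.τ₁) (add_zero 1)).comp β (add_comm 1 i) := by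
        rw [ShortComplex.ShortExact.extClass_naturality hS' hS Φ]
    _ = 0 := by
        rw [Abelian.Ext.comp_assoc_of_second_deg_zero, hβc, Abelian.Ext.comp_zero]

lemma localCohomologyVanishes_span_of_card_lt [IsNoetherianRing R] (s : Finset R)
    (hi : s.card < i) : LocalCohomologyVanishes (Ideal.span (s : Set R)) i Z := by
  classical
  induction s using Finset.induction_on generalizing i with
  | empty =>
    intro K _ α
    have : Projective (ModuleCat.of R (R ⧸ (⊥ : Ideal R))) :=
      (IsProjective.iff_projective _).1
        (Module.Projective.of_equiv (Submodule.quotEquivOfEqBot _ rfl).symm)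
    obtain ⟨j, rfl⟩ := Nat.exists_eq_succ_of_ne_zero hi.ne'
    exact ⟨⊥, bot_le, by simp, Abelian.Ext.eq_zero_of_projective _⟩
  | insert x s hx ih =>
    rw [Finset.card_insert_of_notMem hx] at hi
    obtain ⟨j, rfl⟩ := Nat.exists_eq_succ_of_ne_zero (Nat.ne_zero_of_lt hi)
    rw [Finset.coe_insert, Ideal.span_insert, sup_comm]
    exact (ih (Nat.lt_of_succ_lt_succ hi)).sup_span_singleton x (ih (Nat.lt_of_succ_lt hi))

lemma exists_forall_localCohomologyVanishes [IsNoetherianRing R] (I : Ideal R) :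
    ∃ r, ∀ i, r < i → ∀ Z : ModuleCat.{u} R, LocalCohomologyVanishes I i Z := by
  obtain ⟨s, rfl⟩ := (isNoetherianRing_iff_ideal_fg R).1 inferInstance I
  exact ⟨s.card, fun _ hi _ ↦ localCohomologyVanishes_span_of_card_lt s hi⟩

end LocalCohomology

section FinitelyGenerated

variable {R : Type u} [CommRing R] {I : Ideal R} {i : ℕ}

lemma LocalCohomologyVanishes.X₂_of_shortExact {S : ShortComplex (ModuleCat.{u} R)}
    (hS : S.ShortExact) (h₁ : LocalCohomologyVanishes I i S.X₁)
    (h₃ : LocalCohomologyVanishes I i S.X₃) :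
    LocalCohomologyVanishes I i S.X₂ := by
  intro K hK α
  obtain ⟨L, hLK, hL, hα⟩ := h₃ K hK (α.comp (Abelian.Ext.mk₀ S.g) (add_zero i))
  obtain ⟨β, hβ⟩ := Abelian.Ext.covariant_sequence_exact₂ _ hS
    ((Abelian.Ext.mk₀ (quotientFactor hLK)).comp α (zero_add i))
    (by rwa [Abelian.Ext.comp_assoc_of_third_deg_zero])
  obtain ⟨M, hML, hM, hβM⟩ := h₁ L hL β
  refine ⟨M, hML.trans hLK, hM, ?_⟩
  rw [← quotientFactor_comp hML hLK, ← Abelian.Ext.mk₀_comp_mk₀_assoc, ← hβ,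
    ← Abelian.Ext.comp_assoc_of_third_deg_zero, hβM, Abelian.Ext.zero_comp]

lemma LocalCohomologyVanishes.X₃_of_shortExact {S : ShortComplex (ModuleCat.{u} R)}
    (hS : S.ShortExact) (h₁ : LocalCohomologyVanishes I (i + 1) S.X₁)
    (h₂ : LocalCohomologyVanishes I i S.X₂) :
    LocalCohomologyVanishes I i S.X₃ := by
  intro K hK α
  obtain ⟨L, hLK, hL, hα⟩ := h₁ K hK (α.comp hS.extClass rfl)
  obtain ⟨β, hβ⟩ := Abelian.Ext.covariant_sequence_exact₃ _ hS
    ((Abelian.Ext.mk₀ (quotientFactor hLK)).comp α (zero_add i)) rfl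
    (by rwa [Abelian.Ext.comp_assoc _ _ _ (zero_add i) rfl (by omega)])
  obtain ⟨M, hML, hM, hβM⟩ := h₂ L hL β
  refine ⟨M, hML.trans hLK, hM, ?_⟩
  rw [← quotientFactor_comp hML hLK, ← Abelian.Ext.mk₀_comp_mk₀_assoc, ← hβ,
    ← Abelian.Ext.comp_assoc_of_third_deg_zero, hβM, Abelian.Ext.zero_comp]

variable [IsNoetherianRing R]

lemma localCohomologyVanishes_of_finite {c : ℕ}
    (h : ∀ i, c < i → LocalCohomologyVanishes I i (ModuleCat.of R R)) (hi : c < i)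
    (Z : Type u) [AddCommGroup Z] [Module R Z] [hZ : Module.Finite R Z] :
    LocalCohomologyVanishes I i (ModuleCat.of R Z) := by
  obtain ⟨r, hr⟩ := exists_forall_localCohomologyVanishes I
  -- Descending induction on `i`, phrased as induction on `d`.
  obtain ⟨d, hd⟩ : ∃ d, r < i + d := ⟨r + 1, by omega⟩
  induction d generalizing i Z with
  | zero => exact hr i hd _
  | succ d ih =>
    have cyclic (N : Type u) [AddCommGroup N] [Module R N] (π : R →ₗ[R] N)
        (hπ : Function.Surjective π) : LocalCohomologyVanishes I i (ModuleCat.of R N) :=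
      .X₃_of_shortExact (LinearMap.shortExact_shortComplexKer hπ)
        (ih (i := i + 1) (by omega) _ (by omega)) (h i hi)
    induction hZ using IsNoetherianRing.induction_on_isQuotientEquivQuotientPrime R with
    | subsingleton N => exact cyclic N 0 (Function.surjective_to_subsingleton _)
    | quotient N p e =>
      exact cyclic N (e.symm ∘ₗ p.1.mkQ) (e.symm.surjective.comp p.1.mkQ_surjective)
    | exact N₁ N₂ N₃ f g hf hg hfg h₁ h₃ =>
      exact .X₂_of_shortExact (ModuleCat.shortComplex_shortExact
        (ModuleCat.shortComplexOfCompEqZero f g hfg.linearMap_comp_eq_zero) hfg hf hg) h₁ h₃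

lemma exists_ext_universal (X : ModuleCat.{u} R) [Module.Finite R X] (n : ℕ) :
    ∃ (Z : ModuleCat.{u} R) (_ : Module.Finite R Z) (ξ : Abelian.Ext X Z n),
      ∀ (M : ModuleCat.{u} R) (i j : ℕ) (hij : n + i = j) (α : Abelian.Ext X M j),
        ∃ γ : Abelian.Ext Z M i, ξ.comp γ hij = α := by
  induction n with
  | zero =>
    refine ⟨X, inferInstance, Abelian.Ext.mk₀ (𝟙 X), fun M i j hij α ↦ ?_⟩
    obtain rfl : i = j := by omega
    exact ⟨α, Abelian.Ext.mk₀_id_comp α⟩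
  | succ n ih =>
    obtain ⟨Z, _, ξ, hξ⟩ := ih
    obtain ⟨P, _, _, _, _, π, hπ⟩ := Module.exists_finite_presentation R Z
    have hS := LinearMap.shortExact_shortComplexKer hπ
    refine ⟨ModuleCat.of R (LinearMap.ker π), inferInstance, ξ.comp hS.extClass rfl,
      fun M i j hij α ↦ ?_⟩
    obtain ⟨β, rfl⟩ := hξ M (i + 1) j (by omega) α
    obtain ⟨γ, rfl⟩ := precomp_extClass_surjective_of_projective_X₂ M hS i β
    exact ⟨γ, Abelian.Ext.comp_assoc _ _ _ rfl (add_comm 1 i) (by omega)⟩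

lemma exists_quotientFactor_comp_eq_zero {c : ℕ}
    (h : ∀ i, c < i → LocalCohomologyVanishes I i (ModuleCat.of R R)) :
    ∃ (L : Ideal R) (hL : L ≤ I), I ≤ L.radical ∧ ∀ (M : ModuleCat.{u} R) (i : ℕ), c < i →
      ∀ α : Abelian.Ext (ModuleCat.of R (R ⧸ I)) M i,
        (Abelian.Ext.mk₀ (quotientFactor hL)).comp α (zero_add i) = 0 := by
  obtain ⟨Z, _, ξ, hξ⟩ := exists_ext_universal (ModuleCat.of R (R ⧸ I)) (c + 1)
  obtain ⟨L, hLI, hL, hξL⟩ :=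
    localCohomologyVanishes_of_finite h (Nat.lt_succ_self c) Z I Ideal.le_radical ξ
  refine ⟨L, hLI, hL, fun M i hi α ↦ ?_⟩
  obtain ⟨γ, rfl⟩ := hξ M (i - (c + 1)) i (by omega) α
  rw [← Abelian.Ext.comp_assoc _ _ _ (zero_add _) _ (by omega), hξL, Abelian.Ext.zero_comp]

end FinitelyGenerated

section FiniteExt

variable {R : Type*} [CommRing R] [IsNoetherianRing R]

lemma module_finite_of_ker_le_range {A B C : Type*} [AddCommGroup A] [AddCommGroup B]
    [AddCommGroup C] [Module R A] [Module R B] [Module R C] (f : A →ₗ[R] B) (g : B →ₗ[R] C)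
    (_ : Module.Finite R A) (_ : Module.Finite R C)
    (h : LinearMap.ker g ≤ LinearMap.range f) : Module.Finite R B :=
  have : Module.Finite R (LinearMap.ker g) := .of_injective _ (Submodule.inclusion_injective h)
  have : Module.Finite R (B ⧸ LinearMap.ker g) := .equiv g.quotKerEquivRange.symm
  .of_submodule_quotient (LinearMap.ker g)

variable {C : Type*} [Category* C] [Abelian C] [Linear R C] [HasExt.{w} C]
  {S : ShortComplex C} (hS : S.ShortExact) (X : C) (n : ℕ)
include hS

lemma finite_ext_X₂_left (h₁ : Module.Finite R (Abelian.Ext S.X₁ X n))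
    (h₃ : Module.Finite R (Abelian.Ext S.X₃ X n)) : Module.Finite R (Abelian.Ext S.X₂ X n) :=
  module_finite_of_ker_le_range ((Abelian.Ext.mk₀ S.g).precompOfLinear R X (zero_add n))
    ((Abelian.Ext.mk₀ S.f).precompOfLinear R X (zero_add n)) h₃ h₁
    fun α hα ↦ Abelian.Ext.contravariant_sequence_exact₂ hS X α hα

lemma finite_ext_X₃_left (h₁ : ∀ m, m + 1 = n → Module.Finite R (Abelian.Ext S.X₁ X m))
    (h₂ : Module.Finite R (Abelian.Ext S.X₂ X n)) : Module.Finite R (Abelian.Ext S.X₃ X n) := by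
  cases n with
  | zero =>
    have := hS.epi_g
    exact .of_injective ((Abelian.Ext.mk₀ S.g).precompOfLinear R X (zero_add 0))
      (Abelian.Ext.precomp_mk₀_injective_of_epi X S.g)
  | succ m =>
    exact module_finite_of_ker_le_range (hS.extClass.precompOfLinear R X (add_comm 1 m))
      ((Abelian.Ext.mk₀ S.g).precompOfLinear R X (zero_add (m + 1))) (h₁ m rfl) h₂
      fun α hα ↦ Abelian.Ext.contravariant_sequence_exact₃ hS X α hα (add_comm 1 m)

lemma finite_ext_X₁_right (h₃ : ∀ m, m + 1 = n → Module.Finite R (Abelian.Ext X S.X₃ m))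
    (h₂ : Module.Finite R (Abelian.Ext X S.X₂ n)) : Module.Finite R (Abelian.Ext X S.X₁ n) := by
  cases n with
  | zero =>
    have := hS.mono_f
    exact .of_injective ((Abelian.Ext.mk₀ S.f).postcompOfLinear R X (add_zero 0))
      (Abelian.Ext.postcomp_mk₀_injective_of_mono X S.f)
  | succ m =>
    exact module_finite_of_ker_le_range (hS.extClass.postcompOfLinear R X rfl)
      ((Abelian.Ext.mk₀ S.f).postcompOfLinear R X (add_zero (m + 1))) (h₃ m rfl) h₂
      fun α hα ↦ Abelian.Ext.covariant_sequence_exact₁ X hS α hα rfl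

lemma finite_ext_X₃_right (h₂ : Module.Finite R (Abelian.Ext X S.X₂ n))
    (h₁ : Module.Finite R (Abelian.Ext X S.X₁ (n + 1))) :
    Module.Finite R (Abelian.Ext X S.X₃ n) :=
  module_finite_of_ker_le_range ((Abelian.Ext.mk₀ S.g).postcompOfLinear R X (add_zero n))
    (hS.extClass.postcompOfLinear R X rfl) h₂ h₁
    fun α hα ↦ Abelian.Ext.covariant_sequence_exact₃ X hS α rfl hα

end FiniteExt

section Cofinite

lemma le_annihilator_ker {R N : Type*} [CommRing R] [AddCommGroup N] [Module R N] {K : Ideal R}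
    (π : (R ⧸ K) →ₗ[R] N) : K ≤ Module.annihilator R (LinearMap.ker π) :=
  Ideal.annihilator_quotient.ge.trans
    (LinearMap.annihilator_le_of_injective _ (Submodule.injective_subtype (LinearMap.ker π)))

variable {R : Type u} [CommRing R] [IsNoetherianRing R] {I : Ideal R}

lemma finite_ext_of_le_radical_annihilator {M : ModuleCat.{u} R} {n : ℕ}
    (hM : ∀ m ≤ n, Module.Finite R (Abelian.Ext (ModuleCat.of R (R ⧸ I)) M m))
    (N : Type u) [AddCommGroup N] [Module R N] [hN : Module.Finite R N]
    (hIN : I ≤ (Module.annihilator R N).radical) :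
    Module.Finite R (Abelian.Ext (ModuleCat.of R N) M n) := by
  induction n using Nat.strong_induction_on generalizing N with
  | _ n ih =>
  have cyclic (N : Type u) [AddCommGroup N] [Module R N] (π : (R ⧸ I) →ₗ[R] N)
      (hπ : Function.Surjective π) : Module.Finite R (Abelian.Ext (ModuleCat.of R N) M n) := by
    refine finite_ext_X₃_left (LinearMap.shortExact_shortComplexKer hπ) M n (fun m hm ↦ ?_)
      (hM n le_rfl)
    exact ih m (by omega) (fun j hj ↦ hM j (by omega)) _
      ((le_annihilator_ker π).trans Ideal.le_radical)
  induction hN using IsNoetherianRing.induction_on_isQuotientEquivQuotientPrime R with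
  | subsingleton N => exact cyclic N 0 (Function.surjective_to_subsingleton _)
  | quotient N p e =>
    have hIp : I ≤ p.1 := by
      rwa [e.annihilator_eq, Ideal.annihilator_quotient, p.2.radical] at hIN
    exact cyclic N (e.symm ∘ₗ Submodule.factor hIp)
      (e.symm.surjective.comp (Submodule.factor_surjective hIp))
  | exact N₁ N₂ N₃ f g hf hg hfg h₁ h₃ =>
    exact finite_ext_X₂_left (ModuleCat.shortComplex_shortExact
      (ModuleCat.shortComplexOfCompEqZero f g hfg.linearMap_comp_eq_zero) hfg hf hg) M n
      (h₁ (hIN.trans (Ideal.radical_mono (LinearMap.annihilator_le_of_injective f hf))))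
      (h₃ (hIN.trans (Ideal.radical_mono (LinearMap.annihilator_le_of_surjective g hg))))

lemma finite_ext_of_forall_le {c : ℕ}
    (h : ∀ i, c < i → LocalCohomologyVanishes I i (ModuleCat.of R R)) {M : ModuleCat.{u} R}
    (hM : ∀ i ≤ c, Module.Finite R (Abelian.Ext (ModuleCat.of R (R ⧸ I)) M i)) (i : ℕ) :
    Module.Finite R (Abelian.Ext (ModuleCat.of R (R ⧸ I)) M i) := by
  obtain ⟨L, hLI, hL, restriction_eq_zero⟩ := exists_quotientFactor_comp_eq_zero h
  induction i using Nat.strong_induction_on with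
  | _ i ih =>
  obtain hi | hi := le_or_gt i c
  · exact hM i hi
  obtain ⟨j, rfl⟩ := Nat.exists_eq_succ_of_ne_zero (Nat.ne_zero_of_lt hi)
  let π : (R ⧸ L) →ₗ[R] (R ⧸ I) := Submodule.factor hLI
  have hS := LinearMap.shortExact_shortComplexKer (f := π) (Submodule.factor_surjective hLI)
  have ker_finite := finite_ext_of_le_radical_annihilator (n := j)
    (fun m hm ↦ ih m (by omega)) (LinearMap.ker π)
    (hL.trans (Ideal.radical_mono (le_annihilator_ker π)))
  exact .of_surjective (hS.extClass.precompOfLinear R M (add_comm 1 j)) fun α ↦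
    Abelian.Ext.contravariant_sequence_exact₃ hS M α (restriction_eq_zero M _ hi α) (add_comm 1 j)

lemma finite_ext_ker_and_coker (h : ∀ i, 1 < i → LocalCohomologyVanishes I i (ModuleCat.of R R))
    {M N : Type u} [AddCommGroup M] [Module R M] [AddCommGroup N] [Module R N] (f : M →ₗ[R] N)
    (hM : ∀ i, Module.Finite R (Abelian.Ext (ModuleCat.of R (R ⧸ I)) (ModuleCat.of R M) i))
    (hN : ∀ i, Module.Finite R (Abelian.Ext (ModuleCat.of R (R ⧸ I)) (ModuleCat.of R N) i)) :
    (∀ i, Module.Finite R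
      (Abelian.Ext (ModuleCat.of R (R ⧸ I)) (ModuleCat.of R (LinearMap.ker f)) i)) ∧
    ∀ i, Module.Finite R
      (Abelian.Ext (ModuleCat.of R (R ⧸ I)) (ModuleCat.of R (N ⧸ LinearMap.range f)) i) := by
  have ker_exact : Function.Exact (LinearMap.ker f).subtype f.rangeRestrict := by
    rw [LinearMap.exact_iff, LinearMap.ker_rangeRestrict, Submodule.range_subtype]
  have hS : (ModuleCat.shortComplexOfCompEqZero _ _ ker_exact.linearMap_comp_eq_zero).ShortExact :=
    ModuleCat.shortComplex_shortExact _ ker_exact (Submodule.injective_subtype _)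
      f.surjective_rangeRestrict
  have coker_exact := LinearMap.exact_subtype_mkQ (LinearMap.range f)
  have hT : (ModuleCat.shortComplexOfCompEqZero _ _
      coker_exact.linearMap_comp_eq_zero).ShortExact :=
    ModuleCat.shortComplex_shortExact _ coker_exact (Submodule.injective_subtype _)
      (Submodule.mkQ_surjective _)
  let Q := ModuleCat.of R (R ⧸ I)
  have range_zero : Module.Finite R (Abelian.Ext Q (ModuleCat.of R (LinearMap.range f)) 0) :=
    finite_ext_X₁_right hT Q 0 (by simp) (hN 0)
  have ker_finite : ∀ i, Module.Finite R (Abelian.Ext Q (ModuleCat.of R (LinearMap.ker f)) i) :=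
    finite_ext_of_forall_le h fun i hi ↦ finite_ext_X₁_right hS Q i
      (fun m hm ↦ (by omega : 0 = m) ▸ range_zero) (hM i)
  have range_finite (i : ℕ) :
      Module.Finite R (Abelian.Ext Q (ModuleCat.of R (LinearMap.range f)) i) :=
    finite_ext_X₃_right hS Q i (hM i) (ker_finite (i + 1))
  exact ⟨ker_finite, fun i ↦ finite_ext_X₃_right hT Q i (hN i) (range_finite (i + 1))⟩

end Cofinite

theorem cofinite_abelian_subcategory_general {R : Type u} [CommRing R] [IsNoetherianRing R]
    (I : Ideal R)
    (hcd : ∀ i, 1 < i → Subsingleton ((localCohomology I i).obj (ModuleCat.of R R)))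
    {M N : Type u} [AddCommGroup M] [Module R M] [AddCommGroup N] [Module R N] (f : M →ₗ[R] N)
    (hM : ∀ i, Module.Finite R (((Ext R (ModuleCat R) i).obj
      (.op (ModuleCat.of R (R ⧸ I)))).obj (ModuleCat.of R M)))
    (hN : ∀ i, Module.Finite R (((Ext R (ModuleCat R) i).obj
      (.op (ModuleCat.of R (R ⧸ I)))).obj (ModuleCat.of R N))) :
    (∀ i, Module.Finite R (((Ext R (ModuleCat R) i).obj
      (.op (ModuleCat.of R (R ⧸ I)))).obj (ModuleCat.of R (LinearMap.ker f)))) ∧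
    ∀ i, Module.Finite R (((Ext R (ModuleCat R) i).obj
      (.op (ModuleCat.of R (R ⧸ I)))).obj (ModuleCat.of R (N ⧸ LinearMap.range f))) := by
  simp only [finite_ext_iff] at hM hN ⊢
  exact finite_ext_ker_and_coker (fun i hi ↦ localCohomologyVanishes_of_subsingleton (hcd i hi))
    f hM hN

/-- If `R` is a commutative noetherian ring and `I` an ideal with `cd(I,R) ≤ 1`, then the
full subcategory of `I`-cofinite `R`-modules is an abelian subcategory of the category of
`R`-modules: it is closed under kernels and cokernels of homomorphisms between its
objects. -/
theorem cofinite_abelian_subcategory {R : Type} [CommRing R] [IsNoetherianRing R]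
    (I : Ideal R)
    (hcd : ∀ i : ℕ, 1 < i → Subsingleton ((localCohomology I i).obj (ModuleCat.of R R))) :
    ∀ (M N : Type) (_ : AddCommGroup M) (_ : Module R M) (_ : AddCommGroup N)
      (_ : Module R N) (f : M →ₗ[R] N), IsCofinite I M → IsCofinite I N →
      IsCofinite I (LinearMap.ker f) ∧ IsCofinite I (N ⧸ LinearMap.range f) := by
  intro M N _ _ _ _ f hM hN
  obtain ⟨hker, hcoker⟩ := cofinite_abelian_subcategory_general I hcd f hM.2 hN.2
  exact ⟨⟨(Module.support_subset_of_injective _ (Submodule.injective_subtype _)).trans hM.1, hker⟩,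
    ⟨(Module.support_subset_of_surjective _ (Submodule.mkQ_surjective _)).trans hN.1, hcoker⟩⟩
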